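/- arXiv:1910.03857 — 2 statements merged into one kernel-verified Lean document; each statement's English description precedes it below -/
import Mathlib

section
/- Let π_θ, θ ∈ ℝ^d, be a family of policies on a finite MDP such that for each (s,a) the map θ ↦ π_θ(a|s) is differentiable at θ₀ and π_{θ₀}(a|s) > 0 for all (s,a). Then the map θ ↦ η(π_θ) is differentiable at θ₀ and its gradient is ∇_θ η(π_θ)|_{θ=θ₀} = (1/(1−γ)) · ∑_{s∈S} d^{π_{θ₀}}(s) ∑_{a∈A} π_{θ₀}(a|s) · ∇_θ log π_θ(a|s)|_{θ=θ₀} · Q^{π_{θ₀}}(s,a). -/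
open scoped BigOperators

namespace PolicyOpt

/-- A finite Markov decision process. -/
structure MDP (S A : Type*) [Fintype S] [Fintype A] where
  p : S → A → S → ℝ
  r : S → A → ℝ
  γ : ℝ
  μ0 : S → ℝ
  p_nonneg : ∀ s a s', 0 ≤ p s a s'
  p_sum_one : ∀ s a, ∑ s', p s a s' = 1
  μ0_nonneg : ∀ s, 0 ≤ μ0 s
  μ0_sum_one : ∑ s, μ0 s = 1
  γ_pos : 0 < γ
  γ_lt_one : γ < 1

variable {S A : Type*} [Fintype S] [Fintype A] [DecidableEq S] [DecidableEq A]

/-- A policy assigns to every state a probability distribution over actions. -/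
def IsPolicy (π : S → A → ℝ) : Prop :=
  (∀ s a, 0 ≤ π s a) ∧ ∀ s, ∑ a, π s a = 1

/-- Trajectory prefixes (histories) consisting of `t+1` state-action pairs. -/
abbrev Hist (S A : Type*) (t : ℕ) := Fin (t + 1) → S × A

/-- Probability of a history of length `t+1` when following policy `π`
starting from the initial distribution `μ0`. -/
noncomputable def prob (M : MDP S A) (π : S → A → ℝ) (t : ℕ) (h : Hist S A t) : ℝ :=
  (M.μ0 (h 0).1 * π (h 0).1 (h 0).2) *
    ∏ i : Fin t,
      (M.p (h i.castSucc).1 (h i.castSucc).2 (h i.succ).1 * π (h i.succ).1 (h i.succ).2)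

/-- Probability of a history of length `t+1` when following policy `π`,
conditioned on starting in state `s` with first action `a`. -/
noncomputable def probFrom (M : MDP S A) (π : S → A → ℝ) (s : S) (a : A) (t : ℕ) (h : Hist S A t) : ℝ :=
  (if h 0 = (s, a) then (1 : ℝ) else 0) *
    ∏ i : Fin t,
      (M.p (h i.castSucc).1 (h i.castSucc).2 (h i.succ).1 * π (h i.succ).1 (h i.succ).2)

/-- The last state-action pair of a history. -/
def lastSA {t : ℕ} (h : Hist S A t) : S × A := h (Fin.last t)

/-- State-action value `Q^π(s,a) = E_{τ∼π}[∑_{t≥0} γ^t r(s_t,a_t) | s₀=s, a₀=a]`. -/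
noncomputable def Qval (M : MDP S A) (π : S → A → ℝ) (s : S) (a : A) : ℝ :=
  ∑' t : ℕ, M.γ ^ t * ∑ h : Hist S A t, probFrom M π s a t h * M.r (lastSA h).1 (lastSA h).2

/-- State value `V^π(s)`. -/
noncomputable def Vval (M : MDP S A) (π : S → A → ℝ) (s : S) : ℝ :=
  ∑ a, π s a * Qval M π s a

/-- Advantage `A^π(s,a) = Q^π(s,a) - V^π(s)`. -/
noncomputable def Adv (M : MDP S A) (π : S → A → ℝ) (s : S) (a : A) : ℝ :=
  Qval M π s a - Vval M π s

/-- The value `η(π) = E_{τ∼π} ∑_{t≥0} γ^t r(s_t,a_t)`. -/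
noncomputable def ηval (M : MDP S A) (π : S → A → ℝ) : ℝ :=
  ∑' t : ℕ, M.γ ^ t * ∑ h : Hist S A t, prob M π t h * M.r (lastSA h).1 (lastSA h).2

/-- Normalised discounted state occupancy measure
`d^π(s) = (1-γ) ∑_{t≥0} γ^t Pr_{τ∼π}(s_t = s)`. -/
noncomputable def dOcc (M : MDP S A) (π : S → A → ℝ) (s : S) : ℝ :=
  (1 - M.γ) * ∑' t : ℕ, M.γ ^ t *
    ∑ h : Hist S A t, prob M π t h * (if (lastSA h).1 = s then (1 : ℝ) else 0)

/-- The surrogate objective `L_π(π') = (1/(1-γ)) ∑_s d^π(s) ∑_a π'(a|s) A^π(s,a)`. -/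
noncomputable def Lsur (M : MDP S A) (π π' : S → A → ℝ) : ℝ :=
  (1 - M.γ)⁻¹ * ∑ s, dOcc M π s * ∑ a, π' s a * Adv M π s a

/-- Product of importance sampling ratios `ρ_{0:t}` along a history. -/
noncomputable def ρprod (π π' : S → A → ℝ) {t : ℕ} (h : Hist S A t) : ℝ :=
  ∏ i, π' (h i).1 (h i).2 / π (h i).1 (h i).2

/-- Smoothed product of importance sampling ratios `ρ^{α}_{0:t}`. -/
noncomputable def ρpow (π π' : S → A → ℝ) {t : ℕ} (α : Fin (t + 1) → ℝ) (h : Hist S A t) : ℝ :=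
  ∏ i, (π' (h i).1 (h i).2 / π (h i).1 (h i).2) ^ (α i)

/-- The prefix of length `t+1` of a history of length `T+1` (for `t ≤ T`). -/
def pref {T : ℕ} (h : Hist S A T) (t : Fin (T + 1)) : Hist S A (t : ℕ) :=
  fun i => h (Fin.castLE t.isLt i)

/-!
Write `T` for the state transition matrix of `π'`. Pairing the Bellman equation of `Q^π` with the
flow equation `d^{π'} (1 - γ T) = (1 - γ) μ₀` gives the exact identity
`(1 - γ) (η(π') - η(π)) = ∑ s, d^{π'}(s) ∑ a, (π'(a|s) - π(a|s)) Q^π(s, a)`.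
Its inner sum vanishes at `π' = π`, so differentiating there needs only the continuity of
`π' ↦ d^{π'} = (1 - γ) μ₀ (1 - γ T)⁻¹`, and no derivative of the occupancy measure or of `Q`.
-/

open Matrix Filter Topology

section MatrixSeries

variable {R m n : Type*} [Fintype m] [Fintype n]

lemma mul_pow_mul [Semiring R] [DecidableEq m] [DecidableEq n] (A : Matrix m n R)
    (B : Matrix n m R) (t : ℕ) : A * (B * A) ^ t = (A * B) ^ t * A := by
  induction t with
  | zero => simp only [pow_zero, Matrix.mul_one, Matrix.one_mul]
  | succ t ih => rw [pow_succ, ← Matrix.mul_assoc, ih, pow_succ]; simp only [Matrix.mul_assoc]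

lemma sum_path_weights_eq_dotProduct_pow_mulVec [CommSemiring R] [DecidableEq n]
    (A : Matrix n n R) (w f : n → R) (t : ℕ) :
    ∑ h : Fin (t + 1) → n,
        w (h 0) * (∏ i : Fin t, A (h i.castSucc) (h i.succ)) * f (h (Fin.last t)) =
      w ⬝ᵥ (A ^ t *ᵥ f) := by
  induction t generalizing w with
  | zero =>
    rw [← (Equiv.funUnique (Fin 1) n).symm.sum_comp]
    simp [dotProduct]
  | succ t ih =>
    rw [pow_succ', ← mulVec_mulVec, dotProduct_mulVec, ← ih,
      ← (Fin.consEquiv fun _ : Fin (t + 2) => n).sum_comp, Fintype.sum_prod_type_right]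
    refine Finset.sum_congr rfl fun h _ => ?_
    simp only [Fin.consEquiv_apply, Fin.prod_univ_succ, Fin.castSucc_zero, Fin.castSucc_succ,
      ← Fin.succ_last, Fin.cons_zero, Fin.cons_succ, vecMul, dotProduct, Finset.sum_mul, mul_assoc]

lemma mul_mem_rowStochastic [Semiring R] [PartialOrder R] [IsOrderedRing R] [DecidableEq m]
    {A : Matrix m n R} {B : Matrix n m R} (hA : ∀ i j, 0 ≤ A i j) (hA_one : A *ᵥ 1 = 1)
    (hB : ∀ i j, 0 ≤ B i j) (hB_one : B *ᵥ 1 = 1) : A * B ∈ rowStochastic R m :=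
  ⟨fun i j => Finset.sum_nonneg fun k _ => mul_nonneg (hA i k) (hB k j), by
    rw [← mulVec_mulVec, hB_one, hA_one]⟩

variable [DecidableEq n] {A : Matrix n n ℝ} {γ : ℝ}

lemma summable_smul_pow_of_mem_rowStochastic (hA : A ∈ rowStochastic ℝ n) (hγ : |γ| < 1) :
    Summable fun t : ℕ => (γ • A) ^ t := by
  refine Pi.summable.2 fun i => Pi.summable.2 fun j =>
    Summable.of_norm_bounded (summable_geometric_of_lt_one (abs_nonneg γ) hγ) fun t => ?_
  have hAt : A ^ t ∈ rowStochastic ℝ n := pow_mem hA t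
  rw [smul_pow, Matrix.smul_apply, smul_eq_mul, norm_mul, norm_pow, Real.norm_eq_abs,
    Real.norm_of_nonneg (nonneg_of_mem_rowStochastic hAt)]
  exact mul_le_of_le_one_right (by positivity) (le_one_of_mem_rowStochastic hAt)

lemma isUnit_det_one_sub_smul_of_mem_rowStochastic (hA : A ∈ rowStochastic ℝ n) (hγ : |γ| < 1) :
    IsUnit (1 - γ • A).det :=
  isUnit_det_of_left_inverse
    (summable_smul_pow_of_mem_rowStochastic hA hγ).tsum_pow_mul_one_sub

lemma hasSum_pow_mul_dotProduct_of_mem_rowStochastic (hA : A ∈ rowStochastic ℝ n)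
    (hγ : |γ| < 1) (v f : n → ℝ) :
    HasSum (fun t : ℕ => γ ^ t * (v ⬝ᵥ (A ^ t *ᵥ f))) (v ⬝ᵥ ((1 - γ • A)⁻¹ *ᵥ f)) := by
  have hsum := summable_smul_pow_of_mem_rowStochastic hA hγ
  have hinv : HasSum (fun t : ℕ => (γ • A) ^ t) (1 - γ • A)⁻¹ := by
    rw [inv_eq_left_inv hsum.tsum_pow_mul_one_sub]
    exact hsum.hasSum
  let pairing : Matrix n n ℝ →+ ℝ := AddMonoidHom.mk' (fun B => v ⬝ᵥ (B *ᵥ f)) fun B C => by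
    rw [add_mulVec, dotProduct_add]
  have hcont : Continuous pairing :=
    continuous_const.dotProduct (continuous_id.matrix_mulVec continuous_const)
  simpa [pairing, Function.comp_def, smul_pow, smul_mulVec] using hinv.map pairing hcont

end MatrixSeries

lemma hasFDerivAt_smul_of_eq_zero {𝕜 E F : Type*} [NontriviallyNormedField 𝕜]
    [NormedAddCommGroup E] [NormedSpace 𝕜 E] [NormedAddCommGroup F] [NormedSpace 𝕜 F]
    {c : E → 𝕜} {g : E → F} {g' : E →L[𝕜] F} {x : E} (hc : ContinuousAt c x)
    (hg : HasFDerivAt g g' x) (hgx : g x = 0) :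
    HasFDerivAt (fun y => c y • g y) (c x • g') x := by
  have hc_sub : (fun y => c y - c x) =o[𝓝 x] fun _ => (1 : 𝕜) := by
    rw [Asymptotics.isLittleO_one_iff]
    simpa using hc.tendsto.sub_const (c x)
  have hrem : HasFDerivAt (fun y => (c y - c x) • g y) (0 : E →L[𝕜] F) x := by
    rw [hasFDerivAt_iff_isLittleO]
    simpa [hgx] using hc_sub.smul_isBigO hg.isBigO_sub
  simpa [← add_smul] using (hg.const_smul (c x)).fun_add hrem

section Matrices

omit [DecidableEq A]

/-- The policy `π` as the matrix of a kernel from states to state-action pairs; as an operator it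
averages a function of `(s, a)` over the actions drawn from `π`. -/
def policyMatrix (π : S → A → ℝ) : Matrix S (S × A) ℝ :=
  Matrix.of fun s x => if s = x.1 then π s x.2 else 0

/-- The transition probabilities as the matrix of a kernel from state-action pairs to states. -/
def kernelMatrix (M : MDP S A) : Matrix (S × A) S ℝ :=
  Matrix.of fun x s' => M.p x.1 x.2 s'

/-- The transition matrix of the Markov chain of states induced by `π`. -/
def stateMatrix (M : MDP S A) (π : S → A → ℝ) : Matrix S S ℝ :=
  policyMatrix π * kernelMatrix M

/-- The transition matrix of the Markov chain of state-action pairs induced by `π`. -/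
def stateActionMatrix (M : MDP S A) (π : S → A → ℝ) : Matrix (S × A) (S × A) ℝ :=
  kernelMatrix M * policyMatrix π

lemma policyMatrix_mulVec (π : S → A → ℝ) (F : S × A → ℝ) (s : S) :
    (policyMatrix π *ᵥ F) s = ∑ a, π s a * F (s, a) := by
  simp [policyMatrix, mulVec, dotProduct, Fintype.sum_prod_type_right]

omit [Fintype A] in
lemma vecMul_policyMatrix (μ : S → ℝ) (π : S → A → ℝ) (x : S × A) :
    (μ ᵥ* policyMatrix π) x = μ x.1 * π x.1 x.2 := by
  simp [policyMatrix, vecMul, dotProduct]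

lemma stateActionMatrix_apply (M : MDP S A) (π : S → A → ℝ) (x y : S × A) :
    stateActionMatrix M π x y = M.p x.1 x.2 y.1 * π y.1 y.2 := by
  simp [stateActionMatrix, kernelMatrix, policyMatrix, Matrix.mul_apply]

omit [Fintype S] in
lemma policyMatrix_nonneg {π : S → A → ℝ} (hπ : IsPolicy π) (s : S) (x : S × A) :
    0 ≤ policyMatrix π s x := by
  rw [policyMatrix, of_apply]
  split_ifs
  exacts [hπ.1 s x.2, le_rfl]

lemma policyMatrix_mulVec_comp_fst {π : S → A → ℝ} (hπ : IsPolicy π) (f : S → ℝ) :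
    policyMatrix π *ᵥ (fun x => f x.1) = f := by
  ext s
  simp only [policyMatrix_mulVec, ← Finset.sum_mul, hπ.2, one_mul]

omit [DecidableEq S] in
lemma kernelMatrix_mulVec_one (M : MDP S A) : kernelMatrix M *ᵥ 1 = 1 := by
  ext x
  simp [kernelMatrix, mulVec, dotProduct, M.p_sum_one]

lemma stateMatrix_mem_rowStochastic (M : MDP S A) {π : S → A → ℝ} (hπ : IsPolicy π) :
    stateMatrix M π ∈ rowStochastic ℝ S :=
  mul_mem_rowStochastic (policyMatrix_nonneg hπ) (policyMatrix_mulVec_comp_fst hπ 1)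
    (fun x s' => M.p_nonneg x.1 x.2 s') (kernelMatrix_mulVec_one M)

omit [Fintype S] [Fintype A] in
lemma continuous_policyMatrix :
    Continuous (policyMatrix : (S → A → ℝ) → Matrix S (S × A) ℝ) := by
  refine continuous_matrix fun s x => ?_
  simp only [policyMatrix, of_apply]
  split_ifs <;> fun_prop

end Matrices

lemma stateActionMatrix_mem_rowStochastic (M : MDP S A) {π : S → A → ℝ} (hπ : IsPolicy π) :
    stateActionMatrix M π ∈ rowStochastic ℝ (S × A) :=
  mul_mem_rowStochastic (fun x s' => M.p_nonneg x.1 x.2 s') (kernelMatrix_mulVec_one M)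
    (policyMatrix_nonneg hπ) (policyMatrix_mulVec_comp_fst hπ 1)

lemma sum_probFrom_mul (M : MDP S A) (π : S → A → ℝ) (s : S) (a : A) (t : ℕ) (F : S × A → ℝ) :
    ∑ h : Hist S A t, probFrom M π s a t h * F (lastSA h) =
      Pi.single (s, a) 1 ⬝ᵥ (stateActionMatrix M π ^ t *ᵥ F) := by
  simp only [← sum_path_weights_eq_dotProduct_pow_mulVec, stateActionMatrix_apply, Pi.single_apply,
    probFrom, lastSA]

lemma sum_prob_mul (M : MDP S A) (π : S → A → ℝ) (t : ℕ) (F : S × A → ℝ) :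
    ∑ h : Hist S A t, prob M π t h * F (lastSA h) =
      (M.μ0 ᵥ* policyMatrix π) ⬝ᵥ (stateActionMatrix M π ^ t *ᵥ F) := by
  simp only [← sum_path_weights_eq_dotProduct_pow_mulVec, vecMul_policyMatrix,
    stateActionMatrix_apply, prob, lastSA]

omit [DecidableEq A] in
lemma sum_prob_mul_eq_stateMatrix (M : MDP S A) (π : S → A → ℝ) (t : ℕ) (F : S × A → ℝ) :
    ∑ h : Hist S A t, prob M π t h * F (lastSA h) =
      M.μ0 ⬝ᵥ (stateMatrix M π ^ t *ᵥ (policyMatrix π *ᵥ F)) := by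
  classical
  rw [sum_prob_mul, ← dotProduct_mulVec, mulVec_mulVec, stateActionMatrix, mul_pow_mul,
    ← stateMatrix, mulVec_mulVec]

omit [DecidableEq S] [DecidableEq A] in
lemma MDP.abs_γ_lt_one (M : MDP S A) : |M.γ| < 1 :=
  abs_lt.2 ⟨by linarith [M.γ_pos], M.γ_lt_one⟩

section ActionValue

variable (M : MDP S A) {π : S → A → ℝ} (hπ : IsPolicy π)
include hπ

lemma uncurry_Qval_eq_inv_mulVec : Function.uncurry (Qval M π) =
    (1 - M.γ • stateActionMatrix M π)⁻¹ *ᵥ Function.uncurry M.r := by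
  ext ⟨s, a⟩
  have hsum := hasSum_pow_mul_dotProduct_of_mem_rowStochastic
    (stateActionMatrix_mem_rowStochastic M hπ) M.abs_γ_lt_one (Pi.single (s, a) 1)
    (Function.uncurry M.r)
  rw [← single_one_dotProduct (s, a) (_ *ᵥ _), ← hsum.tsum_eq]
  simp only [← sum_probFrom_mul]
  rfl

lemma bellman_equation : Function.uncurry (Qval M π) = Function.uncurry M.r +
    M.γ • kernelMatrix M *ᵥ (policyMatrix π *ᵥ Function.uncurry (Qval M π)) := by
  have hdet := isUnit_det_one_sub_smul_of_mem_rowStochastic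
    (stateActionMatrix_mem_rowStochastic M hπ) M.abs_γ_lt_one
  have hfix : (1 - M.γ • stateActionMatrix M π) *ᵥ Function.uncurry (Qval M π) =
      Function.uncurry M.r := by
    rw [uncurry_Qval_eq_inv_mulVec M hπ, mulVec_mulVec, mul_nonsing_inv _ hdet, one_mulVec]
  rw [sub_mulVec, one_mulVec, smul_mulVec, stateActionMatrix, ← mulVec_mulVec] at hfix
  exact sub_eq_iff_eq_add.1 hfix

lemma ηval_eq_dotProduct_Qval :
    ηval M π = M.μ0 ⬝ᵥ (policyMatrix π *ᵥ Function.uncurry (Qval M π)) := by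
  have hsum := hasSum_pow_mul_dotProduct_of_mem_rowStochastic
    (stateActionMatrix_mem_rowStochastic M hπ) M.abs_γ_lt_one (M.μ0 ᵥ* policyMatrix π)
    (Function.uncurry M.r)
  rw [dotProduct_mulVec, uncurry_Qval_eq_inv_mulVec M hπ, ← hsum.tsum_eq]
  simp only [← sum_prob_mul]
  rfl

end ActionValue

section Occupancy

omit [DecidableEq A]

lemma dOcc_eq_vecMul_inv (M : MDP S A) {π : S → A → ℝ} (hπ : IsPolicy π) :
    dOcc M π = (1 - M.γ) • (M.μ0 ᵥ* (1 - M.γ • stateMatrix M π)⁻¹) := by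
  ext s
  have hsum := hasSum_pow_mul_dotProduct_of_mem_rowStochastic
    (stateMatrix_mem_rowStochastic M hπ) M.abs_γ_lt_one M.μ0 (Pi.single s 1)
  have hprob (t : ℕ) : ∑ h : Hist S A t, prob M π t h * (if (lastSA h).1 = s then 1 else 0) =
      M.μ0 ⬝ᵥ (stateMatrix M π ^ t *ᵥ Pi.single s 1) := by
    rw [← policyMatrix_mulVec_comp_fst hπ (Pi.single s 1), ← sum_prob_mul_eq_stateMatrix]
    simp only [Pi.single_apply]
  rw [Pi.smul_apply, ← dotProduct_single_one (_ ᵥ* _) s, ← dotProduct_mulVec, ← hsum.tsum_eq]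
  simp only [dOcc, hprob, smul_eq_mul]

lemma bellman_flow_equation (M : MDP S A) {π : S → A → ℝ} (hπ : IsPolicy π) :
    dOcc M π ᵥ* (1 - M.γ • stateMatrix M π) = (1 - M.γ) • M.μ0 := by
  have hdet := isUnit_det_one_sub_smul_of_mem_rowStochastic
    (stateMatrix_mem_rowStochastic M hπ) M.abs_γ_lt_one
  rw [dOcc_eq_vecMul_inv M hπ, smul_vecMul, vecMul_vecMul, nonsing_inv_mul _ hdet, vecMul_one]

lemma one_sub_mul_ηval (M : MDP S A) {π : S → A → ℝ} (hπ : IsPolicy π) :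
    (1 - M.γ) * ηval M π = dOcc M π ⬝ᵥ (policyMatrix π *ᵥ Function.uncurry M.r) := by
  have hsum := hasSum_pow_mul_dotProduct_of_mem_rowStochastic
    (stateMatrix_mem_rowStochastic M hπ) M.abs_γ_lt_one M.μ0
    (policyMatrix π *ᵥ Function.uncurry M.r)
  rw [dOcc_eq_vecMul_inv M hπ, smul_dotProduct, ← dotProduct_mulVec, ← hsum.tsum_eq]
  simp only [← sum_prob_mul_eq_stateMatrix]
  rfl

lemma continuousOn_dOcc (M : MDP S A) : ContinuousOn (dOcc M) {π | IsPolicy π} := by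
  refine ContinuousOn.congr (fun π hπ => ContinuousAt.continuousWithinAt ?_)
    fun π hπ => dOcc_eq_vecMul_inv M hπ
  have hdet := isUnit_det_one_sub_smul_of_mem_rowStochastic
    (stateMatrix_mem_rowStochastic M hπ) M.abs_γ_lt_one
  have hmatrix : Continuous fun π => 1 - M.γ • stateMatrix M π :=
    continuous_const.sub ((continuous_policyMatrix.matrix_mul continuous_const).const_smul M.γ)
  have hinv : ContinuousAt (fun π => (1 - M.γ • stateMatrix M π)⁻¹) π :=
    (continuousAt_matrix_inv _ (NormedRing.inverse_continuousAt hdet.unit)).tendsto.comp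
      hmatrix.continuousAt
  have hvecMul : Continuous fun B : Matrix S S ℝ => (1 - M.γ) • (M.μ0 ᵥ* B) :=
    (continuous_const.matrix_vecMul continuous_id).const_smul (1 - M.γ)
  exact hvecMul.continuousAt.comp hinv

end Occupancy

theorem performance_difference (M : MDP S A) {π π' : S → A → ℝ} (hπ : IsPolicy π)
    (hπ' : IsPolicy π') :
    ηval M π' - ηval M π =
      (1 - M.γ)⁻¹ * ∑ s, dOcc M π' s * ∑ a, (π' s a - π s a) * Qval M π s a := by
  set Q : S × A → ℝ := Function.uncurry (Qval M π) with hQ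
  set V : S → ℝ := policyMatrix π *ᵥ Q with hV
  have hγ : 1 - M.γ ≠ 0 := (sub_pos.2 M.γ_lt_one).ne'
  have hη : (1 - M.γ) * ηval M π = dOcc M π' ⬝ᵥ ((1 - M.γ • stateMatrix M π') *ᵥ V) := by
    rw [dotProduct_mulVec, bellman_flow_equation M hπ', smul_dotProduct, smul_eq_mul,
      ηval_eq_dotProduct_Qval M hπ]
  have hbellman : Q = Function.uncurry M.r + M.γ • kernelMatrix M *ᵥ V := bellman_equation M hπ
  have hresidual : policyMatrix π' *ᵥ Function.uncurry M.r -
      (1 - M.γ • stateMatrix M π') *ᵥ V = policyMatrix π' *ᵥ Q - V := by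
    rw [hbellman, mulVec_add, mulVec_smul, mulVec_mulVec V, ← stateMatrix, sub_mulVec, one_mulVec,
      smul_mulVec]
    abel
  have hgap : (1 - M.γ) * (ηval M π' - ηval M π) = dOcc M π' ⬝ᵥ (policyMatrix π' *ᵥ Q - V) := by
    rw [mul_sub, one_sub_mul_ηval M hπ', hη, ← dotProduct_sub, hresidual]
  rw [eq_inv_mul_iff_mul_eq₀ hγ, hgap]
  simp only [dotProduct, Pi.sub_apply, hV, hQ, policyMatrix_mulVec, Function.uncurry_apply_pair,
    sub_mul, Finset.sum_sub_distrib]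

theorem policy_gradient_theorem_general {E : Type*} [NormedAddCommGroup E] [NormedSpace ℝ E]
    (M : MDP S A) {πθ : E → S → A → ℝ} {θ₀ : E} (hpol : ∀ᶠ θ in 𝓝 θ₀, IsPolicy (πθ θ))
    {gπ : S → A → E →L[ℝ] ℝ} (hdiff : ∀ s a, HasFDerivAt (fun θ => πθ θ s a) (gπ s a) θ₀) :
    HasFDerivAt (fun θ => ηval M (πθ θ))
      ((1 - M.γ)⁻¹ • ∑ s, dOcc M (πθ θ₀) s • ∑ a, Qval M (πθ θ₀) s a • gπ s a) θ₀ := by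
  have hpol₀ : IsPolicy (πθ θ₀) := hpol.self_of_nhds
  have hcont : Tendsto πθ (𝓝 θ₀) (𝓝[{π | IsPolicy π}] πθ θ₀) :=
    tendsto_nhdsWithin_iff.2
      ⟨tendsto_pi_nhds.2 fun s => tendsto_pi_nhds.2 fun a => (hdiff s a).continuousAt, hpol⟩
  have hocc (s : S) : ContinuousAt (fun θ => dOcc M (πθ θ) s) θ₀ :=
    tendsto_pi_nhds.1 ((continuousOn_dOcc M _ hpol₀).tendsto.comp hcont) s
  have hadv (s : S) : HasFDerivAt (fun θ => ∑ a, (πθ θ s a - πθ θ₀ s a) * Qval M (πθ θ₀) s a)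
      (∑ a, Qval M (πθ θ₀) s a • gπ s a) θ₀ :=
    HasFDerivAt.fun_sum fun a _ => ((hdiff s a).sub_const _).mul_const _
  have hsum := HasFDerivAt.fun_sum (u := Finset.univ) fun s _ =>
    hasFDerivAt_smul_of_eq_zero (hocc s) (hadv s) (by simp)
  refine ((hsum.const_mul (1 - M.γ)⁻¹).const_add (ηval M (πθ θ₀))).congr_of_eventuallyEq ?_
  exact hpol.mono fun θ hθ => sub_eq_iff_eq_add'.1 (performance_difference M hpol₀ hθ)

/-- The (discounted) policy gradient theorem:
`∇η(π_θ)|_{θ₀} = (1/(1−γ)) ∑_s d^{π_{θ₀}}(s) ∑_a π_{θ₀}(a|s) ∇log π_θ(a|s)|_{θ₀} Q^{π_{θ₀}}(s,a)`. -/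
theorem policy_gradient_theorem
    (d : ℕ) (M : MDP S A)
    (πθ : EuclideanSpace ℝ (Fin d) → S → A → ℝ)
    (hpol : ∀ θ, IsPolicy (πθ θ))
    (θ₀ : EuclideanSpace ℝ (Fin d))
    (hpos : ∀ s a, 0 < πθ θ₀ s a)
    (gπ : S → A → EuclideanSpace ℝ (Fin d))
    (hdiff : ∀ s a, HasGradientAt (fun θ => πθ θ s a) (gπ s a) θ₀) :
    HasGradientAt (fun θ => ηval M (πθ θ))
      ((1 - M.γ)⁻¹ •
        ∑ s, dOcc M (πθ θ₀) s •
          ∑ a, (πθ θ₀ s a * Qval M (πθ θ₀) s a) • ((πθ θ₀ s a)⁻¹ • gπ s a)) θ₀ := by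
  simpa [hasGradientAt_iff_hasFDerivAt, smul_smul, mul_right_comm _ _ (_⁻¹), (hpos _ _).ne'] using
    policy_gradient_theorem_general M (.of_forall hpol) fun s a => (hdiff s a).hasFDerivAt

end PolicyOpt
end

section
/- Let π_θ, θ ∈ ℝ^d, be a family of policies on a finite MDP such that for each (s,a) the map θ ↦ π_θ(a|s) is differentiable at θ₀. Then for every s ∈ S and (s,a) ∈ S×A the maps θ ↦ V^{π_θ}(s) and θ ↦ Q^{π_θ}(s,a) are differentiable at θ₀, θ ↦ η(π_θ) is differentiable at θ₀, and ∇_θ η(π_θ)|_{θ=θ₀} = (1/(1−γ)) · ∑_{s∈S} d^{π_{θ₀}}(s) · [ ∇_θ V^{π_θ}(s)|_{θ=θ₀} − ∑_{a∈A} π_{θ₀}(a|s) · ∇_θ Q^{π_θ}(s,a)|_{θ=θ₀} ]. -/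
open scoped BigOperators

namespace PolicyOpt

variable {S A : Type*} [Fintype S] [Fintype A] [DecidableEq S] [DecidableEq A]

/-! Conditioning on the first step gives the Bellman equation
`Q(s, a) = r(s, a) + γ ∑ s', p(s' | s, a) V(s')`. Differentiating it, the reward drops out and
`∇V(s) - ∑ a, π(a | s) ∇Q(s, a) = ∇V(s) - γ ∑ s', P_π(s, s') ∇V(s')`, where `P_π` is the state
transition matrix of `π`. The occupancy measure satisfies the dual equation
`d = (1 - γ) μ₀ + γ d P_π`, so pairing the two leaves `(1 - γ) ∑ s, μ₀(s) ∇V(s) = (1 - γ) ∇η`.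

Differentiability comes from the resolvent: `Q = (1 - γ P)⁻¹ r` for the transition matrix `P` on
state-action pairs. As `‖γ P‖ < 1` in the `ℓ^∞` operator norm and this is an open condition, both
the resolvent formula and the Bellman equation persist for all parameters near `θ₀`. -/

open scoped Matrix Topology

attribute [local instance] Matrix.linftyOpNormedRing Matrix.linftyOpNormedAlgebra

section FiniteMatrix

theorem differentiableAt_matrix {𝕜 E m n : Type*} [NontriviallyNormedField 𝕜] [CompleteSpace 𝕜]
    [NormedAddCommGroup E] [NormedSpace 𝕜 E] [Finite m] [Finite n] {F : E → Matrix m n 𝕜} {x : E}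
    (hF : ∀ i j, DifferentiableAt 𝕜 (fun y => F y i j) x) : DifferentiableAt 𝕜 F x := by
  have := Fintype.ofFinite m
  have := Fintype.ofFinite n
  let : NormedAddCommGroup (Matrix m n 𝕜) := Matrix.linftyOpNormedAddCommGroup
  let : NormedSpace 𝕜 (Matrix m n 𝕜) := Matrix.linftyOpNormedSpace
  exact (LinearMap.toContinuousLinearMap
    (Matrix.ofLinearEquiv 𝕜 : (m → n → 𝕜) ≃ₗ[𝕜] Matrix m n 𝕜).toLinearMap).differentiableAt.comp x
      (differentiableAt_pi.mpr fun i => differentiableAt_pi.mpr fun j => hF i j)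

variable {ι : Type*} [Fintype ι] [DecidableEq ι]

theorem sum_path_eq_dotProduct_pow_mulVec {R : Type*} [CommSemiring R] (K : Matrix ι ι R)
    (w g : ι → R) (t : ℕ) :
    ∑ h : Fin (t + 1) → ι,
        w (h 0) * (∏ i : Fin t, K (h i.castSucc) (h i.succ)) * g (h (Fin.last t)) =
      w ⬝ᵥ (K ^ t *ᵥ g) := by
  induction t generalizing w with
  | zero => simp [← (Equiv.funUnique (Fin 1) ι).symm.sum_comp, dotProduct]
  | succ t ih =>
    calc
      _ = ∑ h : Fin (t + 1) → ι, ∑ x,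
            w x * (K x (h 0) * ∏ i : Fin t, K (h i.castSucc) (h i.succ)) * g (h (Fin.last t)) := by
        rw [← (Fin.consEquiv fun _ : Fin (t + 2) => ι).sum_comp, Fintype.sum_prod_type,
          Finset.sum_comm]
        simp [Fin.consEquiv, Fin.prod_univ_succ, ← Fin.succ_last]
      _ = (w ᵥ* K) ⬝ᵥ (K ^ t *ᵥ g) := by
        rw [← ih]
        simp only [Matrix.vecMul, dotProduct, Finset.sum_mul, mul_assoc]
      _ = w ⬝ᵥ (K ^ (t + 1) *ᵥ g) := by
        rw [pow_succ', ← Matrix.mulVec_mulVec, Matrix.dotProduct_mulVec w K]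

theorem inv_one_sub_mulVec {R : Type*} [CommRing R] {K : Matrix ι ι R}
    (hK : IsUnit (1 - K).det) (g : ι → R) :
    (1 - K)⁻¹ *ᵥ g = g + K *ᵥ ((1 - K)⁻¹ *ᵥ g) := by
  have hinv := Matrix.mul_nonsing_inv _ hK
  rw [sub_mul, one_mul, sub_eq_iff_eq_add] at hinv
  simpa [Matrix.add_mulVec] using congrArg (· *ᵥ g) hinv

theorem vecMul_inv_one_sub {R : Type*} [CommRing R] {K : Matrix ι ι R}
    (hK : IsUnit (1 - K).det) (w : ι → R) :
    w ᵥ* (1 - K)⁻¹ = w + w ᵥ* (1 - K)⁻¹ ᵥ* K := by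
  have hinv := Matrix.nonsing_inv_mul _ hK
  rw [mul_sub, mul_one, sub_eq_iff_eq_add] at hinv
  simpa [Matrix.vecMul_add] using congrArg (w ᵥ* ·) hinv

theorem norm_le_one_of_mem_rowStochastic {K : Matrix ι ι ℝ}
    (hK : K ∈ Matrix.rowStochastic ℝ ι) : ‖K‖ ≤ 1 := by
  rw [Matrix.linfty_opNorm_def]
  refine NNReal.coe_le_one.mpr (Finset.sup_le fun i _ => NNReal.coe_le_coe.mp ?_)
  simp [abs_of_nonneg (Matrix.nonneg_of_mem_rowStochastic hK),
    Matrix.sum_row_of_mem_rowStochastic hK]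

section Resolvent

variable {𝕜 : Type*} [NontriviallyNormedField 𝕜] [CompleteSpace 𝕜]

/-- Instance search does not see that the `ℓ^∞` operator norm induces the complete entrywise
uniformity on matrices. -/
local instance instHasSummableGeomSeriesMatrix : HasSummableGeomSeries (Matrix ι ι 𝕜) :=
  have : @CompleteSpace (Matrix ι ι 𝕜) PseudoMetricSpace.toUniformSpace :=
    FiniteDimensional.complete 𝕜 _
  inferInstance

variable {K : Matrix ι ι 𝕜} {c : 𝕜}

theorem hasSum_dotProduct_pow_mulVec (hK : ‖c • K‖ < 1) (w g : ι → 𝕜) :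
    HasSum (fun t : ℕ => c ^ t * (w ⬝ᵥ (K ^ t *ᵥ g))) (w ⬝ᵥ ((1 - c • K)⁻¹ *ᵥ g)) := by
  have hgeom : HasSum (fun t : ℕ => (c • K) ^ t) (1 - c • K)⁻¹ := by
    rw [Matrix.nonsing_inv_eq_ringInverse, NormedRing.inverse_one_sub _ hK]
    exact (summable_geometric_of_norm_lt_one hK).hasSum
  have hcont : Continuous fun B : Matrix ι ι 𝕜 => w ⬝ᵥ (B *ᵥ g) := by fun_prop
  have hsum := hgeom.map
    (AddMonoidHom.mk' (fun B : Matrix ι ι 𝕜 => w ⬝ᵥ (B *ᵥ g)) fun B C => by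
      rw [Matrix.add_mulVec, dotProduct_add]) hcont
  simpa [Function.comp_def, smul_pow, Matrix.smul_mulVec] using hsum

theorem tsum_sum_path_eq_dotProduct_inv_mulVec (hK : ‖c • K‖ < 1) (w g : ι → 𝕜) :
    ∑' t : ℕ, c ^ t * ∑ h : Fin (t + 1) → ι,
        w (h 0) * (∏ i : Fin t, K (h i.castSucc) (h i.succ)) * g (h (Fin.last t)) =
      w ⬝ᵥ ((1 - c • K)⁻¹ *ᵥ g) := by
  simp only [sum_path_eq_dotProduct_pow_mulVec]
  exact (hasSum_dotProduct_pow_mulVec hK w g).tsum_eq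

theorem isUnit_det_one_sub_of_norm_lt_one (hK : ‖K‖ < 1) : IsUnit (1 - K).det :=
  (Matrix.isUnit_iff_isUnit_det _).mp (isUnit_one_sub_of_norm_lt_one hK)

variable {E : Type*} [NormedAddCommGroup E] [NormedSpace 𝕜 E] {F : E → Matrix ι ι 𝕜} {x : E}

theorem differentiableAt_inv_one_sub_mulVec (hF : DifferentiableAt 𝕜 F x) (hx : ‖F x‖ < 1)
    (g : ι → 𝕜) (i : ι) :
    DifferentiableAt 𝕜 (fun y => ((1 - F y)⁻¹ *ᵥ g) i) x := by
  have hinv : DifferentiableAt 𝕜 (fun y => (1 - F y)⁻¹) x := by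
    simp only [Matrix.nonsing_inv_eq_ringInverse]
    exact (differentiableAt_inverse (isUnit_one_sub_of_norm_lt_one hx)).comp x (hF.const_sub 1)
  exact (LinearMap.toContinuousLinearMap
    ((LinearMap.proj i).comp ((Matrix.mulVecBilin 𝕜 𝕜).flip g))).differentiableAt.comp x hinv

end Resolvent

end FiniteMatrix

section Occupancy

/-- The transition matrix on state-action pairs of the Markov chain that `π` induces in `M`. -/
def transitionMatrix (M : MDP S A) (π : S → A → ℝ) : Matrix (S × A) (S × A) ℝ :=
  Matrix.of fun x y => M.p x.1 x.2 y.1 * π y.1 y.2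

/-- The law of the first state-action pair. -/
def initialLaw (M : MDP S A) (π : S → A → ℝ) : S × A → ℝ :=
  fun x => M.μ0 x.1 * π x.1 x.2

/-- The discounted visit weights `∑ₜ γᵗ Pr(sₜ = s, aₜ = a)` of state-action pairs. They are encoded
through the resolvent of the transition matrix, hence unnormalized, unlike `dOcc`. -/
noncomputable def stateActionOccupancy (M : MDP S A) (π : S → A → ℝ) : S × A → ℝ :=
  initialLaw M π ᵥ* (1 - M.γ • transitionMatrix M π)⁻¹

variable (M : MDP S A) {π : S → A → ℝ}

theorem transitionMatrix_mem_rowStochastic (hπ : IsPolicy π) :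
    transitionMatrix M π ∈ Matrix.rowStochastic ℝ (S × A) := by
  refine Matrix.mem_rowStochastic_iff_sum.mpr
    ⟨fun x y => mul_nonneg (M.p_nonneg _ _ _) (hπ.1 _ _), fun x => ?_⟩
  simp [transitionMatrix, Fintype.sum_prod_type, ← Finset.mul_sum, hπ.2, M.p_sum_one]

theorem norm_discount_smul_transitionMatrix_lt_one (hπ : IsPolicy π) :
    ‖M.γ • transitionMatrix M π‖ < 1 :=
  calc
    _ ≤ ‖M.γ‖ * ‖transitionMatrix M π‖ := norm_smul_le _ _
    _ ≤ ‖M.γ‖ := mul_le_of_le_one_right (norm_nonneg _)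
      (norm_le_one_of_mem_rowStochastic (transitionMatrix_mem_rowStochastic M hπ))
    _ < 1 := by rw [Real.norm_of_nonneg M.γ_pos.le]; exact M.γ_lt_one

theorem Qval_eq_inv_mulVec (hP : ‖M.γ • transitionMatrix M π‖ < 1) (s : S) (a : A) :
    Qval M π s a =
      ((1 - M.γ • transitionMatrix M π)⁻¹ *ᵥ Function.uncurry M.r) (s, a) := by
  rw [← single_one_dotProduct (s, a) ((1 - M.γ • transitionMatrix M π)⁻¹ *ᵥ _),
    ← tsum_sum_path_eq_dotProduct_inv_mulVec hP]
  simp only [Qval, probFrom, lastSA, transitionMatrix, Matrix.of_apply, Pi.single_apply,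
    Function.uncurry]

theorem Qval_eq_reward_add (hP : ‖M.γ • transitionMatrix M π‖ < 1) (s : S) (a : A) :
    Qval M π s a = M.r s a + ∑ s', M.γ * M.p s a s' * Vval M π s' := by
  rw [Qval_eq_inv_mulVec M hP, inv_one_sub_mulVec (isUnit_det_one_sub_of_norm_lt_one hP)]
  simp only [Pi.add_apply, Function.uncurry, Matrix.mulVec, dotProduct, Fintype.sum_prod_type, Vval,
    Qval_eq_inv_mulVec M hP, Finset.mul_sum]
  simp only [Matrix.smul_apply, transitionMatrix, Matrix.of_apply, smul_eq_mul, mul_assoc]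

theorem ηval_eq_sum_Vval (hP : ‖M.γ • transitionMatrix M π‖ < 1) :
    ηval M π = ∑ s, M.μ0 s * Vval M π s := by
  have hη : ηval M π = initialLaw M π ⬝ᵥ
      ((1 - M.γ • transitionMatrix M π)⁻¹ *ᵥ Function.uncurry M.r) :=
    tsum_sum_path_eq_dotProduct_inv_mulVec hP (initialLaw M π) (Function.uncurry M.r)
  simp only [hη, dotProduct, Fintype.sum_prod_type, ← Qval_eq_inv_mulVec M hP, Vval,
    initialLaw, Finset.mul_sum, mul_assoc]

theorem dOcc_eq_sum_stateActionOccupancy (hP : ‖M.γ • transitionMatrix M π‖ < 1) (s : S) :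
    dOcc M π s = (1 - M.γ) * ∑ a, stateActionOccupancy M π (s, a) := by
  have hd : dOcc M π s = (1 - M.γ) * (initialLaw M π ⬝ᵥ
      ((1 - M.γ • transitionMatrix M π)⁻¹ *ᵥ fun x => if x.1 = s then 1 else 0)) :=
    congrArg _ (tsum_sum_path_eq_dotProduct_inv_mulVec hP (initialLaw M π)
      fun x => if x.1 = s then 1 else 0)
  rw [hd, Matrix.dotProduct_mulVec, ← stateActionOccupancy, dotProduct, Fintype.sum_prod_type_right]
  simp

theorem stateActionOccupancy_eq (hP : ‖M.γ • transitionMatrix M π‖ < 1) (s : S) (a : A) :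
    stateActionOccupancy M π (s, a) =
      (M.μ0 s + M.γ * ∑ x, stateActionOccupancy M π x * M.p x.1 x.2 s) * π s a := by
  have hflow := congrFun
    (vecMul_inv_one_sub (isUnit_det_one_sub_of_norm_lt_one hP) (initialLaw M π)) (s, a)
  rw [← stateActionOccupancy, Matrix.vecMul_smul] at hflow
  simpa only [Pi.add_apply, Pi.smul_apply, initialLaw, Matrix.vecMul, dotProduct,
    transitionMatrix, Matrix.of_apply, smul_eq_mul, ← mul_assoc, ← Finset.sum_mul,
    ← add_mul] using hflow

theorem dOcc_eq_initial_add_inflow (hπ : IsPolicy π) (s : S) :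
    dOcc M π s =
      (1 - M.γ) * (M.μ0 s + M.γ * ∑ x, stateActionOccupancy M π x * M.p x.1 x.2 s) := by
  have hP := norm_discount_smul_transitionMatrix_lt_one M hπ
  simp only [dOcc_eq_sum_stateActionOccupancy M hP, stateActionOccupancy_eq M hP s,
    ← Finset.mul_sum, hπ.2, mul_one]

theorem dOcc_mul_policy (hπ : IsPolicy π) (s : S) (a : A) :
    dOcc M π s * π s a = (1 - M.γ) * stateActionOccupancy M π (s, a) := by
  rw [dOcc_eq_initial_add_inflow M hπ, mul_assoc,
    ← stateActionOccupancy_eq M (norm_discount_smul_transitionMatrix_lt_one M hπ)]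

omit [DecidableEq A] in
theorem dOcc_eq_initial_add_sum_dOcc (hπ : IsPolicy π) (s' : S) :
    dOcc M π s' =
      (1 - M.γ) * M.μ0 s' + ∑ s, ∑ a, dOcc M π s * (π s a * (M.γ * M.p s a s')) := by
  classical
  rw [dOcc_eq_initial_add_inflow M hπ, mul_add, Finset.mul_sum, Finset.mul_sum,
    Fintype.sum_prod_type]
  refine congrArg _ (Finset.sum_congr rfl fun s _ => Finset.sum_congr rfl fun a _ => ?_)
  rw [← mul_assoc (dOcc M π s), dOcc_mul_policy M hπ]
  ring

omit [DecidableEq A] in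
theorem sum_dOcc_smul_sub_discounted_mean {E : Type*} [AddCommGroup E] [Module ℝ E]
    (hπ : IsPolicy π) (u : S → E) :
    ∑ s, dOcc M π s • (u s - ∑ a, π s a • ∑ s', (M.γ * M.p s a s') • u s') =
      (1 - M.γ) • ∑ s, M.μ0 s • u s := by
  have hflow : ∑ s', dOcc M π s' • u s' =
      (1 - M.γ) • ∑ s, M.μ0 s • u s +
        ∑ s, dOcc M π s • ∑ a, π s a • ∑ s', (M.γ * M.p s a s') • u s' := by
    calc
      _ = ∑ s', ((1 - M.γ) * M.μ0 s' +
            ∑ s, ∑ a, dOcc M π s * (π s a * (M.γ * M.p s a s'))) • u s' := by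
        simp only [← dOcc_eq_initial_add_sum_dOcc M hπ]
      _ = (1 - M.γ) • ∑ s, M.μ0 s • u s +
            ∑ s', ∑ s, ∑ a, (dOcc M π s * (π s a * (M.γ * M.p s a s'))) • u s' := by
        simp only [add_smul, Finset.sum_add_distrib, Finset.sum_smul, Finset.smul_sum, mul_smul]
      _ = _ := by
        rw [Finset.sum_comm]
        simp only [Finset.sum_comm (s := (Finset.univ : Finset S)) (t := (Finset.univ : Finset A)),
          Finset.smul_sum, mul_smul]
  simp only [smul_sub, Finset.sum_sub_distrib, hflow, add_sub_cancel_right]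

end Occupancy

section PolicyGradient

variable {E : Type*} [NormedAddCommGroup E] [NormedSpace ℝ E] (M : MDP S A)
  {πθ : E → S → A → ℝ} {θ₀ : E}

omit [DecidableEq S] [DecidableEq A] in
theorem differentiableAt_discount_smul_transitionMatrix
    (hdiff : ∀ s a, DifferentiableAt ℝ (fun θ => πθ θ s a) θ₀) :
    DifferentiableAt ℝ (fun θ => M.γ • transitionMatrix M (πθ θ)) θ₀ :=
  differentiableAt_matrix fun x y => ((hdiff y.1 y.2).const_mul (M.p x.1 x.2 y.1)).const_mul M.γ

theorem eventually_norm_discount_smul_transitionMatrix_lt_one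
    (hdiff : ∀ s a, DifferentiableAt ℝ (fun θ => πθ θ s a) θ₀)
    (hP : ‖M.γ • transitionMatrix M (πθ θ₀)‖ < 1) :
    ∀ᶠ θ in 𝓝 θ₀, ‖M.γ • transitionMatrix M (πθ θ)‖ < 1 :=
  (differentiableAt_discount_smul_transitionMatrix M hdiff).continuousAt.norm.eventually_lt_const hP

theorem differentiableAt_Qval (hdiff : ∀ s a, DifferentiableAt ℝ (fun θ => πθ θ s a) θ₀)
    (hP : ‖M.γ • transitionMatrix M (πθ θ₀)‖ < 1) (s : S) (a : A) :
    DifferentiableAt ℝ (fun θ => Qval M (πθ θ) s a) θ₀ := by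
  refine (differentiableAt_inv_one_sub_mulVec
    (differentiableAt_discount_smul_transitionMatrix M hdiff) hP
    (Function.uncurry M.r) (s, a)).congr_of_eventuallyEq ?_
  filter_upwards [eventually_norm_discount_smul_transitionMatrix_lt_one M hdiff hP] with θ hθ
  exact Qval_eq_inv_mulVec M hθ s a

theorem differentiableAt_Vval (hdiff : ∀ s a, DifferentiableAt ℝ (fun θ => πθ θ s a) θ₀)
    (hP : ‖M.γ • transitionMatrix M (πθ θ₀)‖ < 1) (s : S) :
    DifferentiableAt ℝ (fun θ => Vval M (πθ θ) s) θ₀ :=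
  DifferentiableAt.fun_sum fun a _ => (hdiff s a).mul (differentiableAt_Qval M hdiff hP s a)

theorem fderiv_Qval (hdiff : ∀ s a, DifferentiableAt ℝ (fun θ => πθ θ s a) θ₀)
    (hP : ‖M.γ • transitionMatrix M (πθ θ₀)‖ < 1) (s : S) (a : A) :
    fderiv ℝ (fun θ => Qval M (πθ θ) s a) θ₀ =
      ∑ s', (M.γ * M.p s a s') • fderiv ℝ (fun θ => Vval M (πθ θ) s') θ₀ := by
  have hBellman : (fun θ => Qval M (πθ θ) s a) =ᶠ[𝓝 θ₀]
      fun θ => M.r s a + ∑ s', M.γ * M.p s a s' * Vval M (πθ θ) s' :=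
    (eventually_norm_discount_smul_transitionMatrix_lt_one M hdiff hP).mono
      fun _ hθ => Qval_eq_reward_add M hθ s a
  have hderiv := (HasFDerivAt.fun_sum fun s' (_ : s' ∈ Finset.univ) =>
    (differentiableAt_Vval M hdiff hP s').hasFDerivAt.const_mul (M.γ * M.p s a s')).const_add
      (M.r s a)
  exact (hderiv.congr_of_eventuallyEq hBellman).fderiv

theorem hasFDerivAt_ηval (hdiff : ∀ s a, DifferentiableAt ℝ (fun θ => πθ θ s a) θ₀)
    (hP : ‖M.γ • transitionMatrix M (πθ θ₀)‖ < 1) :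
    HasFDerivAt (fun θ => ηval M (πθ θ))
      (∑ s, M.μ0 s • fderiv ℝ (fun θ => Vval M (πθ θ) s) θ₀) θ₀ :=
  (HasFDerivAt.fun_sum fun s _ =>
    (differentiableAt_Vval M hdiff hP s).hasFDerivAt.const_mul (M.μ0 s)).congr_of_eventuallyEq <|
      (eventually_norm_discount_smul_transitionMatrix_lt_one M hdiff hP).mono
        fun _ hθ => ηval_eq_sum_Vval M hθ

theorem general_policy_gradient_theorem_general (hπ : IsPolicy (πθ θ₀))
    (hdiff : ∀ s a, DifferentiableAt ℝ (fun θ => πθ θ s a) θ₀) :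
    (∀ s, DifferentiableAt ℝ (fun θ => Vval M (πθ θ) s) θ₀) ∧
      (∀ s a, DifferentiableAt ℝ (fun θ => Qval M (πθ θ) s a) θ₀) ∧
      HasFDerivAt (fun θ => ηval M (πθ θ))
        ((1 - M.γ)⁻¹ • ∑ s, dOcc M (πθ θ₀) s •
          (fderiv ℝ (fun θ => Vval M (πθ θ) s) θ₀ -
            ∑ a, πθ θ₀ s a • fderiv ℝ (fun θ => Qval M (πθ θ) s a) θ₀)) θ₀ := by
  have hP := norm_discount_smul_transitionMatrix_lt_one M hπ
  refine ⟨differentiableAt_Vval M hdiff hP, differentiableAt_Qval M hdiff hP, ?_⟩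
  simp only [fderiv_Qval M hdiff hP]
  rw [sum_dOcc_smul_sub_discounted_mean M hπ, inv_smul_smul₀ (sub_pos.mpr M.γ_lt_one).ne']
  exact hasFDerivAt_ηval M hdiff hP

end PolicyGradient

/-- The general policy gradient theorem (Ciosek–Whiteson): `V^{π_θ}` and `Q^{π_θ}`
are differentiable at `θ₀`, `η(π_θ)` is differentiable at `θ₀`, and
`∇η = (1/(1−γ)) ∑_s d^{π_{θ₀}}(s) (∇V(s) − ∑_a π_{θ₀}(a|s) ∇Q(s,a))`. -/
theorem general_policy_gradient_theorem
    (d : ℕ) (M : MDP S A)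
    (πθ : EuclideanSpace ℝ (Fin d) → S → A → ℝ)
    (hpol : ∀ θ, IsPolicy (πθ θ))
    (θ₀ : EuclideanSpace ℝ (Fin d))
    (gπ : S → A → EuclideanSpace ℝ (Fin d))
    (hdiff : ∀ s a, HasGradientAt (fun θ => πθ θ s a) (gπ s a) θ₀) :
    ∃ (gV : S → EuclideanSpace ℝ (Fin d)) (gQ : S → A → EuclideanSpace ℝ (Fin d)),
      (∀ s, HasGradientAt (fun θ => Vval M (πθ θ) s) (gV s) θ₀) ∧
      (∀ s a, HasGradientAt (fun θ => Qval M (πθ θ) s a) (gQ s a) θ₀) ∧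
      HasGradientAt (fun θ => ηval M (πθ θ))
        ((1 - M.γ)⁻¹ •
          ∑ s, dOcc M (πθ θ₀) s • (gV s - ∑ a, πθ θ₀ s a • gQ s a)) θ₀ := by
  obtain ⟨hV, hQ, hη⟩ := general_policy_gradient_theorem_general M (hpol θ₀)
    fun s a => (hdiff s a).differentiableAt
  exact ⟨_, _, fun s => (hV s).hasGradientAt, fun s a => (hQ s a).hasGradientAt,
    by simpa [hasGradientAt_iff_hasFDerivAt] using hη⟩

end PolicyOpt
end
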